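/- Assume in addition L = ℓ − k > 0. There exists a function β₃, defined on a neighborhood of 0 with β₃(α) = k·α² + O(α³), such that for all sufficiently small (α, β) with β < β₁(α), the larger zero x⁺ = x⁺(α, β) of f_{α,β} satisfies: if α ≥ 0, then x⁺ > A_α = max(0, α) (so x⁺ lies in the interior of σ(α)); and if α < 0, then x⁺ > 0 when β < β₃(α), x⁺ = 0 = A_α when β = β₃(α), and x⁺ < 0 (so x⁺ ∉ σ(α)) when β₃(α) < β < β₁(α). -/

import Mathlib

/-!
Since `f_{α,β}''(x) = P''(x) - Q''(x - α)` is close to `2 (ℓ - k) > 0`, the function `f_{α,β}` is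
strictly convex near `0`, and the position of a point `a` relative to a pair of zeros is governed by
the sign of the derivative at `a`.

* For `α ≥ 0`, evaluate at `A_α = α`: `f_{α,β}'(α) = P'(α) ≤ 0` because `ℓ < 0`, so `x⁺ > α`.
* For `α < 0`, evaluate at `A_α = 0`: `f_{α,β}'(0) = -Q'(-α) ≥ 0` because `k < 0`, so `x⁻ < 0`.
  To the right of `x⁻` the function `f_{α,β}` is negative before `x⁺` and positive after it, so the
  position of `x⁺` is read off the sign of `f_{α,β}(0) = β - Q(-α)`. Hence `β₃(α) = Q(-α)`.
-/

open Set Filter Topology Asymptotics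

section StrictConvex

variable {s : Set ℝ} {f : ℝ → ℝ} {a x y : ℝ}

theorem lt_of_strictConvexOn_of_deriv_nonpos (hf : StrictConvexOn ℝ s f) (hx : x ∈ s) (ha : a ∈ s)
    (hxy : x < y) (hfxy : f x = f y) (hfa : DifferentiableAt ℝ f a) (hfa' : deriv f a ≤ 0) :
    a < y := by
  by_contra! hya
  have hxa : x < a := hxy.trans_le hya
  have hy : y ∈ s := hf.1.ordConnected.out hx ha ⟨hxy.le, hya⟩
  have hsecant : slope f x y ≤ slope f x a :=
    hf.convexOn.slope_mono hx ⟨hy, hxy.ne'⟩ ⟨ha, hxa.ne'⟩ hya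
  have htangent : slope f x a < deriv f a := hf.slope_lt_deriv hx ha hxa hfa
  have hzero : slope f x y = 0 := by simp [slope_def_field, hfxy]
  linarith

theorem lt_of_strictConvexOn_of_deriv_nonneg (hf : StrictConvexOn ℝ s f) (hy : y ∈ s) (ha : a ∈ s)
    (hxy : x < y) (hfxy : f x = f y) (hfa : DifferentiableAt ℝ f a) (hfa' : 0 ≤ deriv f a) :
    x < a := by
  by_contra! hax
  have hay : a < y := hax.trans_lt hxy
  have hx : x ∈ s := hf.1.ordConnected.out ha hy ⟨hax, hxy.le⟩
  have hsecant : slope f y a ≤ slope f y x :=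
    hf.convexOn.slope_mono hy ⟨ha, hay.ne⟩ ⟨hx, hxy.ne⟩ hax
  have htangent : deriv f a < slope f a y := hf.deriv_lt_slope ha hy hay hfa
  have hzero : slope f y x = 0 := by simp [slope_def_field, hfxy]
  rw [slope_comm] at htangent
  linarith

end StrictConvex

theorem cmp_map_eq_of_strictConvexOn {𝕜 : Type*} [Field 𝕜] [LinearOrder 𝕜] [IsStrictOrderedRing 𝕜]
    {s : Set 𝕜} {f : 𝕜 → 𝕜} {x y z : 𝕜} (hf : StrictConvexOn 𝕜 s f) (hx : x ∈ s) (hy : y ∈ s)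
    (hz : z ∈ s) (hxy : x < y) (hxz : x < z) (hfxy : f x = f y) :
    cmp (f z) (f y) = cmp z y := by
  have hslope : StrictMonoOn (slope f x) {w ∈ s | x < w} := fun u hu v hv huv ↦ by
    simpa only [slope_def_field] using
      hf.secant_strict_mono hx hu.1 hv.1 hu.2.ne' hv.2.ne' huv
  have hcmp : cmp (slope f x z) (slope f x y) = cmp z y := hslope.cmp_map_eq ⟨hz, hxz⟩ ⟨hy, hxy⟩
  have hfz : f z = f y + (z - x) * slope f x z := by
    rw [← hfxy, ← smul_eq_mul, sub_smul_slope, vsub_eq_sub, add_sub_cancel]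
  have hzero : slope f x y = 0 := by simp [slope_def_field, hfxy]
  rw [← hcmp, hzero, hfz]
  have hpos : 0 < z - x := sub_pos.mpr hxz
  rcases lt_trichotomy (slope f x z) 0 with hs | hs | hs
  · rw [hs.cmp_eq_lt, cmp_eq_lt_iff]
    linarith [mul_neg_of_pos_of_neg hpos hs]
  · simp [hs]
  · rw [hs.cmp_eq_gt, cmp_eq_gt_iff]
    linarith [mul_pos hpos hs]

open Nat in
theorem isBigO_sub_taylor_sum {E : Type*} [NormedAddCommGroup E] [NormedSpace ℝ E] {f : ℝ → E}
    {x₀ : ℝ} {n : ℕ} (hf : ContDiffAt ℝ (n + 1) f x₀) :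
    (fun x ↦ f x - ∑ i ∈ Finset.range (n + 1), ((i ! : ℝ)⁻¹ * (x - x₀) ^ i) • iteratedDeriv i f x₀)
      =O[𝓝 x₀] fun x ↦ (x - x₀) ^ (n + 1) := by
  obtain ⟨u, hu, hfu⟩ := hf.contDiffOn le_rfl (by simp)
  obtain ⟨r, hr, hru⟩ := Metric.mem_nhds_iff.mp hu
  have hx₀ : x₀ ∈ Metric.ball x₀ r := Metric.mem_ball_self hr
  have htaylor := (taylor_isLittleO (n := n + 1) (convex_ball x₀ r) hx₀
    (by exact_mod_cast hfu.mono hru)).isBigO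
  rw [Metric.isOpen_ball.nhdsWithin_eq hx₀] at htaylor
  have hlast : (fun x ↦ (((n + 1)! : ℝ)⁻¹ * (x - x₀) ^ (n + 1)) • iteratedDeriv (n + 1) f x₀)
      =O[𝓝 x₀] fun x ↦ (x - x₀) ^ (n + 1) := by
    refine .of_bound (‖((n + 1)! : ℝ)⁻¹‖ * ‖iteratedDeriv (n + 1) f x₀‖) ?_
    exact .of_forall fun x ↦ by rw [norm_smul, norm_mul, mul_right_comm]
  refine (htaylor.add hlast).congr_left fun x ↦ ?_
  simp only [taylor_within_apply, iteratedDerivWithin_of_isOpen Metric.isOpen_ball hx₀,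
    Finset.sum_range_succ _ (n + 1)]
  abel

theorem continuousAt_deriv_deriv {𝕜 F : Type*} [NontriviallyNormedField 𝕜] [NormedAddCommGroup F]
    [NormedSpace 𝕜 F] {f : 𝕜 → F} {x : 𝕜} (hf : ContDiffAt 𝕜 2 f x) :
    ContinuousAt (deriv (deriv f)) x :=
  ((hf.derivWithin (m := 1) (by norm_num)).derivWithin (m := 0) (by norm_num)).continuousAt

/-- The displacement function `f_{α,β}(x) = β + P(x) - Q(x - α)`. -/
def displacement (P Q : ℝ → ℝ) (α β x : ℝ) : ℝ :=
  β + P x - Q (x - α)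

section Displacement

variable {P Q : ℝ → ℝ} {α β x : ℝ}

theorem hasDerivAt_displacement (hP : DifferentiableAt ℝ P x) (hQ : DifferentiableAt ℝ Q (x - α)) :
    HasDerivAt (displacement P Q α β) (deriv P x - deriv Q (x - α)) x :=
  (hP.hasDerivAt.const_add β).sub (hQ.hasDerivAt.comp_sub_const x α)

theorem deriv_deriv_displacement (hP : ContDiffAt ℝ 2 P x) (hQ : ContDiffAt ℝ 2 Q (x - α)) :
    deriv (deriv (displacement P Q α β)) x = deriv (deriv P) x - deriv (deriv Q) (x - α) := by
  have hshift : Tendsto (· - α) (𝓝 x) (𝓝 (x - α)) := (continuous_sub_right α).tendsto x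
  have hderiv : deriv (displacement P Q α β) =ᶠ[𝓝 x] fun y ↦ deriv P y - deriv Q (y - α) := by
    filter_upwards [hP.eventually (by simp), hshift.eventually (hQ.eventually (by simp))]
      with y hPy hQy
    exact (hasDerivAt_displacement (hPy.differentiableAt two_ne_zero)
      (hQy.differentiableAt two_ne_zero)).deriv
  have hP' : DifferentiableAt ℝ (deriv P) x :=
    (hP.derivWithin (m := 1) (by norm_num)).differentiableAt one_ne_zero
  have hQ' : DifferentiableAt ℝ (deriv Q) (x - α) :=
    (hQ.derivWithin (m := 1) (by norm_num)).differentiableAt one_ne_zero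
  rw [hderiv.deriv_eq]
  exact (hP'.hasDerivAt.sub (hQ'.hasDerivAt.comp_sub_const x α)).deriv

theorem exists_strictConvexOn_displacement {x₀ α₀ : ℝ} (hP : ContDiffAt ℝ 2 P x₀)
    (hQ : ContDiffAt ℝ 2 Q (x₀ - α₀))
    (hPQ : deriv (deriv Q) (x₀ - α₀) < deriv (deriv P) x₀) :
    ∃ δ > 0, ∀ α ∈ Metric.ball α₀ δ, ∀ β,
      StrictConvexOn ℝ (Metric.ball x₀ δ) (displacement P Q α β) := by
  have hfst : Tendsto Prod.fst (𝓝 (x₀, α₀)) (𝓝 x₀) := continuous_fst.tendsto _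
  have hsub : Tendsto (fun p : ℝ × ℝ ↦ p.1 - p.2) (𝓝 (x₀, α₀)) (𝓝 (x₀ - α₀)) :=
    continuous_sub.tendsto _
  have hlt : ∀ᶠ p : ℝ × ℝ in 𝓝 (x₀, α₀), deriv (deriv Q) (p.1 - p.2) < deriv (deriv P) p.1 :=
    ((continuousAt_deriv_deriv hQ).tendsto.comp hsub).eventually_lt
      ((continuousAt_deriv_deriv hP).tendsto.comp hfst) hPQ
  obtain ⟨δ, hδ, hball⟩ := Metric.eventually_nhds_iff_ball.mp <|
    (hfst.eventually (hP.eventually (by simp))).and <|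
      (hsub.eventually (hQ.eventually (by simp))).and hlt
  refine ⟨δ, hδ, fun α hα β ↦ ?_⟩
  have hnear (x : ℝ) (hx : x ∈ Metric.ball x₀ δ) := hball (x, α) (ball_prod_same x₀ α₀ δ ▸ ⟨hx, hα⟩)
  refine strictConvexOn_of_deriv2_pos' (convex_ball x₀ δ) (fun x hx ↦ ?_) fun x hx ↦ ?_
  · obtain ⟨hPx, hQx, -⟩ := hnear x hx
    exact (hasDerivAt_displacement (hPx.differentiableAt two_ne_zero)
      (hQx.differentiableAt two_ne_zero)).continuousAt.continuousWithinAt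
  · obtain ⟨hPx, hQx, hx''⟩ := hnear x hx
    exact (sub_pos.mpr hx'').trans_eq (deriv_deriv_displacement hPx hQx).symm

theorem eventually_deriv_displacement_self_nonpos (hP : ∀ᶠ x in 𝓝 0, DifferentiableAt ℝ P x)
    (hP1 : deriv P 0 = 0) (hP2 : deriv (deriv P) 0 < 0) (hQ : DifferentiableAt ℝ Q 0)
    (hQ1 : deriv Q 0 = 0) :
    ∀ᶠ α in 𝓝 0, 0 ≤ α → ∀ β, DifferentiableAt ℝ (displacement P Q α β) α ∧
      deriv (displacement P Q α β) α ≤ 0 := by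
  filter_upwards [hP, eventually_nhdsWithin_sign_eq_of_deriv_neg hP2 hP1] with α hPα hsign hα β
  have hderiv : HasDerivAt (displacement P Q α β) (deriv P α) α := by
    have h := hasDerivAt_displacement (β := β) hPα (by rwa [sub_self])
    rwa [sub_self, hQ1, sub_zero] at h
  refine ⟨hderiv.differentiableAt, hderiv.deriv.trans_le ?_⟩
  rwa [← sign_nonpos_iff, hsign, sign_nonpos_iff, zero_sub, neg_nonpos]

theorem eventually_deriv_displacement_zero_nonneg (hQ : ∀ᶠ x in 𝓝 0, DifferentiableAt ℝ Q x)
    (hQ1 : deriv Q 0 = 0) (hQ2 : deriv (deriv Q) 0 < 0) (hP : DifferentiableAt ℝ P 0)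
    (hP1 : deriv P 0 = 0) :
    ∀ᶠ α in 𝓝 0, α ≤ 0 → ∀ β, DifferentiableAt ℝ (displacement P Q α β) 0 ∧
      0 ≤ deriv (displacement P Q α β) 0 := by
  have hneg : Tendsto (fun α : ℝ ↦ -α) (𝓝 0) (𝓝 0) := by
    simpa using continuous_neg.tendsto (0 : ℝ)
  filter_upwards [hneg.eventually hQ,
    hneg.eventually (eventually_nhdsWithin_sign_eq_of_deriv_neg hQ2 hQ1)] with α hQα hsign hα β
  have hderiv : HasDerivAt (displacement P Q α β) (-deriv Q (-α)) 0 := by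
    have h := hasDerivAt_displacement (β := β) hP (by rwa [zero_sub])
    rwa [zero_sub, hP1, zero_sub] at h
  refine ⟨hderiv.differentiableAt, hderiv.deriv.symm.le.trans' ?_⟩
  rwa [neg_nonneg, ← sign_nonpos_iff, hsign, sign_nonpos_iff, zero_sub, neg_neg]

theorem cmp_eq_cmp_zero_of_displacement_eq_zero {s : Set ℝ} {y : ℝ} (hP0 : P 0 = 0)
    (hf : StrictConvexOn ℝ s (displacement P Q α β)) (h0 : 0 ∈ s) (hx : x ∈ s) (hy : y ∈ s)
    (hxy : x < y) (hfx : displacement P Q α β x = 0) (hfy : displacement P Q α β y = 0)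
    (hdiff : DifferentiableAt ℝ (displacement P Q α β) 0)
    (hderiv : 0 ≤ deriv (displacement P Q α β) 0) :
    cmp β (Q (-α)) = cmp 0 y := by
  have hfxy : displacement P Q α β x = displacement P Q α β y := hfx.trans hfy.symm
  have hx0 : x < 0 := lt_of_strictConvexOn_of_deriv_nonneg hf hy h0 hxy hfxy hdiff hderiv
  have hf0 : displacement P Q α β 0 = β - Q (-α) := by simp [displacement, hP0]
  rw [← cmp_map_eq_of_strictConvexOn hf hx hy h0 hxy hx0 hfxy, hfy, hf0, cmp_sub_zero]

end Displacement

theorem exists_abs_comp_neg_sub_sq_le {Q : ℝ → ℝ} {k : ℝ} (hQ : ContDiffAt ℝ 3 Q 0)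
    (hQ0 : Q 0 = 0) (hQ1 : deriv Q 0 = 0) (hQ2 : deriv (deriv Q) 0 = 2 * k) :
    ∃ C > 0, ∃ ε > 0, ∀ α : ℝ, |α| < ε → |Q (-α) - k * α ^ 2| ≤ C * |α| ^ 3 := by
  have htaylor : (fun x ↦ Q x - k * x ^ 2) =O[𝓝 0] fun x ↦ x ^ 3 := by
    have hQ3 : ContDiffAt ℝ ((2 : ℕ) + 1) Q 0 := by exact_mod_cast hQ
    refine (isBigO_sub_taylor_sum hQ3).congr (fun x ↦ ?_) fun x ↦ by rw [sub_zero]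
    simp only [Finset.sum_range_succ, Finset.sum_range_zero, iteratedDeriv_succ,
      iteratedDeriv_zero, hQ0, hQ1, hQ2, Nat.factorial, sub_zero, smul_eq_mul]
    push_cast
    ring
  obtain ⟨C, hC, hbound⟩ := htaylor.exists_pos
  obtain ⟨ε, hε, hball⟩ := Metric.eventually_nhds_iff.mp hbound.bound
  refine ⟨C, hC, ε, hε, fun α hα ↦ ?_⟩
  simpa using hball (y := -α) (by simpa using hα)

theorem stmt_9_general (ℓ k : ℝ) (hℓ : ℓ < 0) (hkℓ : k < ℓ) (P Q : ℝ → ℝ)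
    (hP : ContDiffAt ℝ 2 P 0) (hQ : ContDiffAt ℝ 3 Q 0)
    (hP0 : P 0 = 0) (hP1 : deriv P 0 = 0) (hP2 : deriv (deriv P) 0 = 2 * ℓ)
    (hQ0 : Q 0 = 0) (hQ1 : deriv Q 0 = 0) (hQ2 : deriv (deriv Q) 0 = 2 * k) :
    ∃ β₃ : ℝ → ℝ,
      (∃ C > (0 : ℝ), ∃ ε₁ > (0 : ℝ), ∀ α : ℝ, |α| < ε₁ →
        |β₃ α - k * α ^ 2| ≤ C * |α| ^ 3) ∧
      (∃ ε > (0 : ℝ), ∃ δ > (0 : ℝ), ∀ α β : ℝ, |α| < ε →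
        ∀ xm xp : ℝ, xm < xp → xm ∈ Set.Ioo (-δ) δ → xp ∈ Set.Ioo (-δ) δ →
          displacement P Q α β xm = 0 → displacement P Q α β xp = 0 →
          ((0 ≤ α → max 0 α < xp) ∧
           (α < 0 →
             (β < β₃ α → 0 < xp) ∧
             (β = β₃ α → xp = 0) ∧
             (β₃ α < β → xp < 0)))) := by
  have hQC2 : ContDiffAt ℝ 2 Q 0 := hQ.of_le (by norm_num)
  have hPdiff : ∀ᶠ x in 𝓝 0, DifferentiableAt ℝ P x :=
    (hP.eventually (by simp)).mono fun _ h ↦ h.differentiableAt two_ne_zero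
  have hQdiff : ∀ᶠ x in 𝓝 0, DifferentiableAt ℝ Q x :=
    (hQC2.eventually (by simp)).mono fun _ h ↦ h.differentiableAt two_ne_zero
  obtain ⟨δ, hδ, hconvex⟩ := exists_strictConvexOn_displacement (α₀ := 0) hP
    (by rwa [sub_zero]) (by rw [sub_zero]; linarith)
  obtain ⟨ε, hε, hnear⟩ := Metric.eventually_nhds_iff_ball.mp <|
    (eventually_deriv_displacement_self_nonpos hPdiff hP1 (by linarith)
      hQdiff.self_of_nhds hQ1).and <|
    (eventually_deriv_displacement_zero_nonneg hQdiff hQ1 (by linarith)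
      hPdiff.self_of_nhds hP1).and (Metric.ball_mem_nhds 0 hδ)
  refine ⟨fun α ↦ Q (-α), exists_abs_comp_neg_sub_sq_le hQ hQ0 hQ1 hQ2, ε, hε, δ, hδ, ?_⟩
  intro α β hα xm xp hlt hxm hxp hzm hzp
  obtain ⟨hderiv_self, hderiv_zero, hαδ⟩ := hnear α (by simpa using hα)
  have hball : Metric.ball 0 δ = Ioo (-δ) δ := by rw [Real.ball_eq_Ioo, zero_sub, zero_add]
  have hfconvex : StrictConvexOn ℝ (Ioo (-δ) δ) (displacement P Q α β) := hball ▸ hconvex α hαδ β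
  refine ⟨fun hα_nonneg ↦ ?_, fun hα_neg ↦ ?_⟩
  · obtain ⟨hdiff, hderiv⟩ := hderiv_self hα_nonneg β
    rw [max_eq_right hα_nonneg]
    exact lt_of_strictConvexOn_of_deriv_nonpos hfconvex hxm (by rwa [← hball]) hlt
      (hzm.trans hzp.symm) hdiff hderiv
  · obtain ⟨hdiff, hderiv⟩ := hderiv_zero hα_neg.le β
    have hcmp : cmp β (Q (-α)) = cmp 0 xp := cmp_eq_cmp_zero_of_displacement_eq_zero hP0
      hfconvex ⟨neg_lt_zero.mpr hδ, hδ⟩ hxm hxp hlt hzm hzp hdiff hderiv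
    exact ⟨(lt_iff_lt_of_cmp_eq_cmp hcmp).mp, fun hβ ↦ ((eq_iff_eq_of_cmp_eq_cmp hcmp).mp hβ).symm,
      (lt_iff_lt_of_cmp_eq_cmp (cmp_eq_cmp_symm.mp hcmp)).mp⟩

theorem stmt_9 (ℓ k L : ℝ) (hℓ : ℓ < 0) (hk : k < 0) (hLdef : L = ℓ - k) (hLpos : 0 < L)
    (P Q : ℝ → ℝ)
    (hP : ContDiffAt ℝ 3 P 0) (hQ : ContDiffAt ℝ 3 Q 0)
    (hP0 : P 0 = 0) (hP1 : deriv P 0 = 0) (hP2 : deriv (deriv P) 0 = 2 * ℓ)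
    (hQ0 : Q 0 = 0) (hQ1 : deriv Q 0 = 0) (hQ2 : deriv (deriv Q) 0 = 2 * k)
    (ε₀ : ℝ) (hε₀ : 0 < ε₀) (xc β₁ : ℝ → ℝ)
    (hxc : ContDiffOn ℝ 1 xc (Set.Ioo (-ε₀) ε₀))
    (hβ₁ : ContDiffOn ℝ 1 β₁ (Set.Ioo (-ε₀) ε₀))
    (hasym : ∃ C > (0 : ℝ), ∀ α ∈ Set.Ioo (-ε₀) ε₀,
      |xc α + (k / L) * α| ≤ C * α ^ 2 ∧ |β₁ α - (k * ℓ / L) * α ^ 2| ≤ C * |α| ^ 3)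
    (hdouble : ∀ α ∈ Set.Ioo (-ε₀) ε₀,
      β₁ α + P (xc α) - Q (xc α - α) = 0 ∧
      deriv (fun x => β₁ α + P x - Q (x - α)) (xc α) = 0) :
    ∃ β₃ : ℝ → ℝ,
      -- β₃(α) = k·α² + O(α³)
      (∃ C > (0 : ℝ), ∃ ε₁ > (0 : ℝ), ∀ α : ℝ, |α| < ε₁ →
        |β₃ α - k * α ^ 2| ≤ C * |α| ^ 3) ∧
      -- position of the larger zero x⁺ relative to A_α = max(0, α)
      (∃ ε > (0 : ℝ), ∃ δ > (0 : ℝ), ∀ α β : ℝ, |α| < ε → |β| < ε → β < β₁ α →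
        ∀ xm xp : ℝ, xm < xp → xm ∈ Set.Ioo (-δ) δ → xp ∈ Set.Ioo (-δ) δ →
          β + P xm - Q (xm - α) = 0 → β + P xp - Q (xp - α) = 0 →
          (∀ x ∈ Set.Ioo (-δ) δ, β + P x - Q (x - α) = 0 → (x = xm ∨ x = xp)) →
          ((0 ≤ α → max 0 α < xp) ∧
           (α < 0 →
             (β < β₃ α → 0 < xp) ∧
             (β = β₃ α → xp = 0) ∧
             (β₃ α < β → xp < 0)))) := by
  obtain ⟨β₃, hasymp, ε, hε, δ, hδ, hpos⟩ := stmt_9_general ℓ k hℓ (by linarith) P Q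
    (hP.of_le (by norm_num)) hQ hP0 hP1 hP2 hQ0 hQ1 hQ2
  exact ⟨β₃, hasymp, ε, hε, δ, hδ, fun α β hα _ _ xm xp hlt hxm hxp hzm hzp _ ↦
    hpos α β hα xm xp hlt hxm hxp hzm hzp⟩
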